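/- Let Ω ⊂ ℝ^d be a bounded measurable set, let V : ℝ^d → ℝ^d be continuously differentiable with bounded derivative (hence Lipschitz), and let F : ℝ × ℝ^d → ℝ be continuously differentiable with F and its total derivative bounded. For t ∈ ℝ define T_t(x) = x + t·V(x), and define the material derivative Ḟ : ℝ^d → ℝ by Ḟ(x) = ∂_t F(0,x) + ⟨V(x), ∇_x F(0,x)⟩. Then the function t ↦ ∫_{T_t(Ω)} F(t,x) dx has derivative at t = 0 equal to ∫_Ω ( Ḟ(x) + F(0,x)·div V(x) ) dx, where div V(x) is the trace of the Jacobian matrix of V at x. -/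

import Mathlib

open MeasureTheory RealInnerProductSpace

/-!
Pulling the integral back to `Ω` along `T_t` turns it into `∫_Ω det (1 + t DV) F(t, T_t)`, over a
domain that no longer depends on `t`. This is legitimate for small `t` only: `V` is Lipschitz on the
compact closure of `Ω`, so `T_t` is then injective on `Ω`, and its Jacobian determinant stays
positive there. The pulled-back integrand is a `C¹` function of `t` with coefficients `x`, `V x` and
`DV x` ranging in a compact set, so one may differentiate under the integral; at `t = 0` the
determinant contributes the trace of `DV` and the composition contributes the material derivative.
-/

open Set
open scoped NNReal Topology

section Determinant

variable {𝕜 E : Type*} [NontriviallyNormedField 𝕜] [NormedAddCommGroup E] [NormedSpace 𝕜 E]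
  [FiniteDimensional 𝕜 E]

lemma contDiff_continuousLinearMap_det [CompleteSpace 𝕜] {n : WithTop ℕ∞} :
    ContDiff 𝕜 n (fun A : E →L[𝕜] E => A.det) := by
  let b := Module.finBasis 𝕜 E
  have det_eq_sum (A : E →L[𝕜] E) :
      A.det = ∑ σ, Equiv.Perm.sign σ • ∏ i, (b.coord (σ i)).toContinuousLinearMap (A (b i)) := by
    rw [ContinuousLinearMap.det, ← LinearMap.det_toMatrix b, Matrix.det_apply]
    simp [LinearMap.toMatrix_apply]
  simp only [det_eq_sum, Units.smul_def, zsmul_eq_mul]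
  fun_prop

lemma hasDerivAt_det_one_add_smul (A : E →L[𝕜] E) :
    HasDerivAt (fun t : 𝕜 => (1 + t • A).det) (LinearMap.trace 𝕜 E A.toLinearMap) 0 := by
  let b := Module.finBasis 𝕜 E
  let M := LinearMap.toMatrix b b A.toLinearMap
  let p : Polynomial 𝕜 := (1 + (Polynomial.X : Polynomial 𝕜) • M.map Polynomial.C).det
  have det_eq (t : 𝕜) :
      (1 + t • A).det = 1 + M.trace * t + p.divX.divX.eval t * t ^ 2 := by
    rw [← Matrix.det_one_add_smul, ContinuousLinearMap.det, ← LinearMap.det_toMatrix b]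
    congr 1
    simp [M, LinearMap.toMatrix_one]
  have remainder : HasDerivAt (fun t => p.divX.divX.eval t * t ^ 2) 0 0 := by
    simpa using (p.divX.divX.hasDerivAt 0).fun_mul (hasDerivAt_pow 2 (0 : 𝕜))
  simp only [det_eq]
  rw [LinearMap.trace_eq_matrix_trace 𝕜 b]
  simpa [M] using (((hasDerivAt_id (0 : 𝕜)).const_mul M.trace).const_add 1).fun_add remainder

end Determinant

lemma injOn_id_add_of_lipschitzOnWith {E : Type*} [NormedAddCommGroup E] {g : E → E} {s : Set E}
    {K : ℝ≥0} (hg : LipschitzOnWith K g s) (hK : K < 1) : InjOn (fun x => x + g x) s := by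
  have hanti := (AntilipschitzWith.id.domRestrict s).add_lipschitzWith hg.to_restrict
    (by simpa using hK)
  exact injOn_iff_injective.2 hanti.injective

lemma hasDerivAt_integral_comp_of_contDiff {X P G : Type*} [MeasurableSpace X]
    [NormedAddCommGroup P] [NormedSpace ℝ P] [NormedAddCommGroup G] [NormedSpace ℝ G]
    {μ : Measure X} [IsFiniteMeasure μ] {H : ℝ × P → G} (hH : ContDiff ℝ 1 H) {p : X → P}
    (hp : AEStronglyMeasurable p μ) {K : Set P} (hK : IsCompact K) (hpK : ∀ᵐ x ∂μ, p x ∈ K)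
    (t₀ : ℝ) :
    HasDerivAt (fun t => ∫ x, H (t, p x) ∂μ) (∫ x, deriv (fun t => H (t, p x)) t₀ ∂μ) t₀ := by
  let H' : ℝ × P → G := fun z => fderiv ℝ H z (1, 0)
  have hH' : Continuous H' := (hH.continuous_fderiv one_ne_zero).clm_apply continuous_const
  have hderiv (t : ℝ) (q : P) : HasDerivAt (fun s => H (s, q)) (H' (t, q)) t :=
    (hH.differentiable one_ne_zero _).hasFDerivAt.comp_hasDerivAt t
      ((hasDerivAt_id t).prodMk (hasDerivAt_const t q))
  have hmeas {J : ℝ × P → G} (hJ : Continuous J) (t : ℝ) :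
      AEStronglyMeasurable (fun x => J (t, p x)) μ :=
    (hJ.comp (Continuous.prodMk_right t)).comp_aestronglyMeasurable hp
  have hbound {J : ℝ × P → G} (hJ : Continuous J) :
      ∃ C, ∀ᵐ x ∂μ, ∀ t ∈ Metric.closedBall t₀ 1, ‖J (t, p x)‖ ≤ C := by
    obtain ⟨C, hC⟩ := ((isCompact_closedBall t₀ 1).prod hK).exists_bound_of_continuousOn
      hJ.continuousOn
    exact ⟨C, hpK.mono fun x hx t ht => hC (t, p x) ⟨ht, hx⟩⟩
  obtain ⟨C, hC⟩ := hbound hH.continuous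
  obtain ⟨C', hC'⟩ := hbound hH'
  have hint : Integrable (fun x => H (t₀, p x)) μ :=
    .of_bound (hmeas hH.continuous t₀) C
      (hC.mono fun x hx => hx t₀ (Metric.mem_closedBall_self zero_le_one))
  simp only [(hderiv t₀ _).deriv]
  exact (hasDerivAt_integral_of_dominated_loc_of_deriv_le
    (Metric.closedBall_mem_nhds t₀ one_pos) (.of_forall (hmeas hH.continuous)) hint
    (hmeas hH' t₀) hC' (integrable_const C') (.of_forall fun x t _ => hderiv t (p x))).2

section PerturbationOfIdentity

variable {E G : Type*} [NormedAddCommGroup E] [NormedSpace ℝ E] [NormedAddCommGroup G]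
  [NormedSpace ℝ G] {V : E → E} {F : ℝ × E → G} {Ω : Set E} {x : E}

/-- The perturbation of identity `T_t = id + tV` generated by the velocity field `V`; it moves the
domain `Ω` to `T_t(Ω)`. -/
def perturbId (V : E → E) (t : ℝ) : E → E := fun x => x + t • V x

/-- The material derivative at `t = 0` of the family of integrands `F (t, ·)`, i.e. its derivative
along the trajectories `t ↦ T_t x`. It is only meaningful (not the junk value of `deriv`) when
`t ↦ F (t, T_t x)` is differentiable at `0`. -/
noncomputable def materialDeriv (V : E → E) (F : ℝ × E → G) (x : E) : G :=
  deriv (fun t => F (t, perturbId V t x)) 0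

/-- The divergence of a vector field, as the coordinate-free trace of its derivative: the
first-order rate at which `id + tV` changes volume at `x`. -/
noncomputable def divergence (V : E → E) (x : E) : ℝ :=
  LinearMap.trace ℝ E (fderiv ℝ V x).toLinearMap

lemma perturbId_zero (V : E → E) (x : E) : perturbId V 0 x = x := by
  simp [perturbId]

lemma hasFDerivAt_perturbId (hV : DifferentiableAt ℝ V x) (t : ℝ) :
    HasFDerivAt (perturbId V t) (1 + t • fderiv ℝ V x) x :=
  (hasFDerivAt_id x).add (hV.hasFDerivAt.const_smul t)

lemma hasDerivAt_comp_perturbId (hF : DifferentiableAt ℝ F (0, x)) :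
    HasDerivAt (fun t => F (t, perturbId V t x)) (fderiv ℝ F (0, x) (1, V x)) 0 := by
  have htraj : HasDerivAt (fun t => (t, perturbId V t x)) (1, V x) 0 :=
    (hasDerivAt_id 0).prodMk <| by
      simpa [perturbId] using ((hasDerivAt_id (0 : ℝ)).smul_const (V x)).const_add x
  refine HasFDerivAt.comp_hasDerivAt 0 ?_ htraj
  simpa only [perturbId_zero] using hF.hasFDerivAt

lemma eventually_injOn_perturbId (hV : LocallyLipschitz V) (hΩ : IsCompact Ω) :
    ∀ᶠ t in 𝓝 (0 : ℝ), InjOn (perturbId V t) Ω := by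
  obtain ⟨K, hK⟩ := hV.locallyLipschitzOn.exists_lipschitzOnWith_of_compact hΩ
  have hsmall : ∀ᶠ t in 𝓝 (0 : ℝ), ‖t‖₊ * K < 1 :=
    (by fun_prop : Continuous fun t : ℝ => ‖t‖₊ * K).continuousAt.eventually_lt_const (by simp)
  filter_upwards [hsmall] with t ht
  exact injOn_id_add_of_lipschitzOnWith ((lipschitzWith_smul t).comp_lipschitzOnWith hK) ht

lemma eventually_forall_det_one_add_smul_fderiv_pos (hDV : Continuous (fderiv ℝ V))
    (hΩ : IsCompact Ω) :
    ∀ᶠ t in 𝓝 (0 : ℝ), ∀ x ∈ Ω, 0 < (1 + t • fderiv ℝ V x).det := by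
  have hdet : Continuous fun z : ℝ × E => (1 + z.1 • fderiv ℝ V z.2).det :=
    ContinuousLinearMap.continuous_det.comp (by fun_prop)
  refine hΩ.eventually_forall_of_forall_eventually fun x _ => ?_
  exact hdet.continuousAt.eventually_const_lt (by simp [ContinuousLinearMap.det])

variable [FiniteDimensional ℝ E]

lemma hasDerivAt_det_smul_comp_perturbId (hF : DifferentiableAt ℝ F (0, x)) :
    HasDerivAt (fun t : ℝ => (1 + t • fderiv ℝ V x).det • F (t, perturbId V t x))
      (materialDeriv V F x + divergence V x • F (0, x)) 0 := by
  have hcomp := (hasDerivAt_comp_perturbId (V := V) hF).differentiableAt.hasDerivAt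
  simpa [perturbId_zero, ContinuousLinearMap.det, materialDeriv, divergence] using
    (hasDerivAt_det_one_add_smul (fderiv ℝ V x)).fun_smul hcomp

variable [MeasurableSpace E] [BorelSpace E] (μ : Measure E) [μ.IsAddHaarMeasure]

lemma eventually_setIntegral_image_perturbId (hΩm : MeasurableSet Ω)
    (hΩb : Bornology.IsBounded Ω) (hV : ContDiff ℝ 1 V) :
    ∀ᶠ t in 𝓝 (0 : ℝ), ∀ f : E → G, ∫ x in perturbId V t '' Ω, f x ∂μ =
      ∫ x in Ω, (1 + t • fderiv ℝ V x).det • f (perturbId V t x) ∂μ := by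
  filter_upwards [eventually_injOn_perturbId hV.locallyLipschitz hΩb.isCompact_closure,
    eventually_forall_det_one_add_smul_fderiv_pos (hV.continuous_fderiv one_ne_zero)
      hΩb.isCompact_closure] with t hinj hpos f
  have hfderiv (x : E) : HasFDerivWithinAt (perturbId V t) (1 + t • fderiv ℝ V x) Ω x :=
    (hasFDerivAt_perturbId (hV.differentiable one_ne_zero x) t).hasFDerivWithinAt
  rw [integral_image_eq_integral_abs_det_fderiv_smul μ hΩm (fun x _ => hfderiv x)
    (hinj.mono subset_closure)]
  refine setIntegral_congr_fun hΩm fun x hx => ?_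
  simp only [abs_of_pos (hpos x (subset_closure hx))]

lemma hasDerivAt_setIntegral_det_smul_comp_perturbId (hΩm : MeasurableSet Ω)
    (hΩb : Bornology.IsBounded Ω) (hV : ContDiff ℝ 1 V) (hF : ContDiff ℝ 1 F) :
    HasDerivAt
      (fun t : ℝ => ∫ x in Ω, (1 + t • fderiv ℝ V x).det • F (t, perturbId V t x) ∂μ)
      (∫ x in Ω, (materialDeriv V F x + divergence V x • F (0, x)) ∂μ) 0 := by
  -- `DV` is merely continuous, so it enters as a parameter, on which `H` depends smoothly.
  let H : ℝ × (E × E × (E →L[ℝ] E)) → G := fun z =>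
    (1 + z.1 • z.2.2.2).det • F (z.1, z.2.1 + z.1 • z.2.2.1)
  have hH : ContDiff ℝ 1 H :=
    (contDiff_continuousLinearMap_det.comp (by fun_prop)).smul (hF.comp (by fun_prop))
  let p : E → E × E × (E →L[ℝ] E) := fun x => (x, V x, fderiv ℝ V x)
  have hp : Continuous p :=
    continuous_id.prodMk (hV.continuous.prodMk (hV.continuous_fderiv one_ne_zero))
  have : Fact (μ Ω < ⊤) := ⟨hΩb.measure_lt_top⟩
  have hderiv := hasDerivAt_integral_comp_of_contDiff (μ := μ.restrict Ω) hH hp.aestronglyMeasurable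
    (hΩb.isCompact_closure.image hp)
    (ae_restrict_of_forall_mem hΩm fun x hx => mem_image_of_mem p (subset_closure hx)) 0
  refine hderiv.congr_deriv (integral_congr_ae (.of_forall fun x => ?_))
  exact (hasDerivAt_det_smul_comp_perturbId (hF.differentiable one_ne_zero _)).deriv

theorem stmt_2_general (hΩm : MeasurableSet Ω) (hΩb : Bornology.IsBounded Ω)
    (hV : ContDiff ℝ 1 V) (hF : ContDiff ℝ 1 F) :
    HasDerivAt (fun t : ℝ => ∫ x in perturbId V t '' Ω, F (t, x) ∂μ)
      (∫ x in Ω, (materialDeriv V F x + divergence V x • F (0, x)) ∂μ) 0 := by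
  refine (hasDerivAt_setIntegral_det_smul_comp_perturbId μ hΩm hΩb hV hF).congr_of_eventuallyEq ?_
  filter_upwards [eventually_setIntegral_image_perturbId (G := G) μ hΩm hΩb hV] with t ht
  exact ht fun x => F (t, x)

end PerturbationOfIdentity

lemma materialDeriv_eq_deriv_add_inner_gradient {E : Type*} [NormedAddCommGroup E]
    [InnerProductSpace ℝ E] [CompleteSpace E] (V : E → E) {F : ℝ × E → ℝ} {x : E}
    (hF : DifferentiableAt ℝ F (0, x)) :
    materialDeriv V F x =
      deriv (fun s : ℝ => F (s, x)) 0 + ⟪V x, gradient (fun y => F (0, y)) x⟫ := by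
  have htime : deriv (fun s : ℝ => F (s, x)) 0 = fderiv ℝ F (0, x) (1, 0) :=
    (hF.hasFDerivAt.comp_hasDerivAt (0 : ℝ)
      ((hasDerivAt_id (0 : ℝ)).prodMk (hasDerivAt_const (0 : ℝ) x))).deriv
  have hspace : ⟪V x, gradient (fun y => F (0, y)) x⟫ = fderiv ℝ F (0, x) (0, V x) := by
    have hslice : HasFDerivAt (fun y => F (0, y)) ((fderiv ℝ F (0, x)).comp (.inr ℝ ℝ E)) x :=
      hF.hasFDerivAt.comp x (hasFDerivAt_prodMk_right (0 : ℝ) x)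
    simp [inner_gradient_right, hslice.fderiv]
  rw [materialDeriv, (hasDerivAt_comp_perturbId hF).deriv, htime, hspace, ← map_add]
  simp

/-- Formula (4.6a): the derivative at `t = 0` of `t ↦ ∫_{T_t(Ω)} F(t,·)`, where
`T_t = id + tV`, equals `∫_Ω (Ḟ + F(0,·) · div V)`, with material derivative
`Ḟ(x) = ∂ₜF(0,x) + ⟨V(x), ∇ₓF(0,x)⟩`. -/
theorem stmt_2 (d : ℕ) (Ω : Set (EuclideanSpace ℝ (Fin d)))
    (hΩm : MeasurableSet Ω) (hΩb : Bornology.IsBounded Ω)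
    (V : EuclideanSpace ℝ (Fin d) → EuclideanSpace ℝ (Fin d))
    (hV : ContDiff ℝ 1 V) (CV : ℝ) (hVb : ∀ x, ‖fderiv ℝ V x‖ ≤ CV)
    (F : ℝ × EuclideanSpace ℝ (Fin d) → ℝ) (hF : ContDiff ℝ 1 F)
    (CF : ℝ) (hFb : ∀ p, |F p| ≤ CF)
    (CdF : ℝ) (hdFb : ∀ p, ‖fderiv ℝ F p‖ ≤ CdF) :
    HasDerivAt (fun t : ℝ => ∫ x in (fun x => x + t • V x) '' Ω, F (t, x))
      (∫ x in Ω,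
        ((deriv (fun s : ℝ => F (s, x)) 0 + ⟪V x, gradient (fun y => F (0, y)) x⟫) +
          F (0, x) * LinearMap.trace ℝ (EuclideanSpace ℝ (Fin d)) (fderiv ℝ V x).toLinearMap))
      0 := by
  refine (stmt_2_general volume hΩm hΩb hV hF).congr_deriv (setIntegral_congr_fun hΩm fun x _ => ?_)
  simp only [materialDeriv_eq_deriv_add_inner_gradient V (hF.differentiable one_ne_zero (0, x)),
    divergence, smul_eq_mul, mul_comm]
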